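/- Let G be a 2-degenerate simple graph with maximum degree Δ. Then the strong chromatic index of G satisfies χ'_s(G) ≤ 6Δ − 5. -/

import Mathlib

/-- `G` is `k`-degenerate: every nonempty (induced) subgraph has a vertex of degree at most `k`. -/
def SimpleGraph.Degenerate {V : Type*} (k : ℕ) (G : SimpleGraph V) : Prop :=
  ∀ s : Set V, s.Nonempty → ∃ v ∈ s, (s ∩ {w | G.Adj v w}).ncard ≤ k

/-- Two edges (as unordered pairs) share an endpoint. -/
def Sym2.ShareEndpoint {V : Type*} (e f : Sym2 V) : Prop := ∃ v, v ∈ e ∧ v ∈ f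

/-- Two edges are within distance one: they share an endpoint, or some edge of `G`
shares an endpoint with both. -/
def SimpleGraph.WithinDistOne {V : Type*} (G : SimpleGraph V) (e f : Sym2 V) : Prop :=
  Sym2.ShareEndpoint e f ∨ ∃ g ∈ G.edgeSet, Sym2.ShareEndpoint e g ∧ Sym2.ShareEndpoint g f

/-- `G` admits a strong edge-coloring with `n` colors: distinct edges within distance one
receive different colors. -/
def SimpleGraph.StrongEdgeColorable {V : Type*} (G : SimpleGraph V) (n : ℕ) : Prop :=
  ∃ c : G.edgeSet → Fin n, ∀ e f : G.edgeSet, e ≠ f → G.WithinDistOne e.1 f.1 → c e ≠ c f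

/-- The strong chromatic index of `G`. -/
noncomputable def SimpleGraph.strongChromaticIndex {V : Type*} (G : SimpleGraph V) : ℕ :=
  sInf {n | G.StrongEdgeColorable n}

/-!
Repeatedly removing a vertex of degree at most `k` orders the vertices so that each has at most `k`
lower neighbors. Color the edges greedily by increasing smaller endpoint. When `uv` with `u < v` is
reached, a colored edge in conflict with it either is incident to a lower neighbor of `u` or `v`, or
joins an upper neighbor of `u` or `v` to one of its other lower neighbors, of which there are at
most `k - 1`. Counting these edges and discarding `uv` itself leaves at most
`(4k - 2)Δ - k(2k - 1)` forbidden colors, which for `k = 2` is `6Δ - 6`.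
-/

section Degeneracy

variable {V : Type*} {G : SimpleGraph V} {k : ℕ}

theorem exists_injOn_rank_of_degenerate (hG : G.Degenerate k) (s : Finset V) :
    ∃ r : V → ℕ, Set.InjOn r s ∧
      ∀ v ∈ s, {w ∈ (s : Set V) | G.Adj v w ∧ r w < r v}.ncard ≤ k := by
  classical
  induction s using Finset.strongInduction with
  | H s ih =>
    obtain rfl | hs := s.eq_empty_or_nonempty
    · exact ⟨fun _ ↦ 0, by simp⟩
    obtain ⟨v, hv, hvk⟩ := hG s hs
    obtain ⟨r, hinj, hr⟩ := ih (s.erase v) (Finset.erase_ssubset hv)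
    let r' : V → ℕ := Function.update r v (s.sup r + 1)
    have rank_of_ne {w : V} (hw : w ≠ v) : r' w = r w := Function.update_of_ne hw _ _
    have rank_lt {w : V} (hw : w ∈ s) (hwv : w ≠ v) : r' w < r' v := by
      rw [rank_of_ne hwv, show r' v = s.sup r + 1 from Function.update_self ..]
      exact Nat.lt_succ_of_le (Finset.le_sup hw)
    have eq_of_rank_eq {w : V} (hw : w ∈ s) (h : r' w = r' v) : w = v :=
      of_not_not fun hwv ↦ (rank_lt hw hwv).ne h
    refine ⟨r', fun x hx y hy hxy ↦ ?_, fun x hx ↦ ?_⟩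
    · obtain rfl | hxv := eq_or_ne x v
      · exact (eq_of_rank_eq hy hxy.symm).symm
      obtain rfl | hyv := eq_or_ne y v
      · exact eq_of_rank_eq hx hxy
      rw [rank_of_ne hxv, rank_of_ne hyv] at hxy
      exact hinj (Finset.mem_erase.2 ⟨hxv, hx⟩) (Finset.mem_erase.2 ⟨hyv, hy⟩) hxy
    · obtain rfl | hxv := eq_or_ne x v
      · refine (Set.ncard_le_ncard ?_ (s.finite_toSet.inter_of_left _)).trans hvk
        exact fun w hw ↦ ⟨hw.1, hw.2.1⟩
      · refine (Set.ncard_le_ncard ?_ ?_).trans (hr x (Finset.mem_erase.2 ⟨hxv, hx⟩))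
        · rintro w ⟨hw, hadj, hlt⟩
          have hwv : w ≠ v := by
            rintro rfl
            exact hlt.not_gt (rank_lt hx hxv)
          rw [rank_of_ne hwv, rank_of_ne hxv] at hlt
          exact ⟨Finset.mem_erase.2 ⟨hwv, hw⟩, hadj, hlt⟩
        · exact (s.erase v).finite_toSet.subset (Set.sep_subset _ _)

variable (G) in
/-- The neighbors of `v` that precede `v` in the given vertex order. -/
def lowerNeighbors [LinearOrder V] [G.LocallyFinite] (v : V) : Finset V :=
  {w ∈ G.neighborFinset v | w < v}

variable (G) in
/-- The neighbors of `v` that follow `v` in the given vertex order. -/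
def upperNeighbors [LinearOrder V] [G.LocallyFinite] (v : V) : Finset V :=
  {w ∈ G.neighborFinset v | v < w}

section LinearOrder

variable [LinearOrder V] [G.LocallyFinite] {u v w : V}

@[simp]
theorem mem_lowerNeighbors : w ∈ lowerNeighbors G v ↔ G.Adj v w ∧ w < v := by
  simp [lowerNeighbors]

@[simp]
theorem mem_upperNeighbors : w ∈ upperNeighbors G v ↔ G.Adj v w ∧ v < w := by
  simp [upperNeighbors]

theorem mem_lowerNeighbors_of_mem_upperNeighbors (h : w ∈ upperNeighbors G v) :
    v ∈ lowerNeighbors G w := by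
  simpa [G.adj_comm] using h

variable (G) in
theorem card_lowerNeighbors_add_card_upperNeighbors (v : V) :
    (lowerNeighbors G v).card + (upperNeighbors G v).card = G.degree v := by
  have upperNeighbors_eq : upperNeighbors G v = {w ∈ G.neighborFinset v | ¬ w < v} := by
    ext w
    simp only [mem_upperNeighbors, Finset.mem_filter, SimpleGraph.mem_neighborFinset, not_lt]
    exact and_congr_right fun h ↦ h.ne.le_iff_lt.symm
  rw [upperNeighbors_eq, lowerNeighbors, Finset.card_filter_add_card_filter_not,
    SimpleGraph.card_neighborFinset_eq_degree]

theorem colorable_of_card_lowerNeighbors_le [WellFoundedLT V]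
    (hk : ∀ v, (lowerNeighbors G v).card ≤ k) : G.Colorable (k + 1) := by
  have exists_color (v : V) (c : ∀ w < v, Fin (k + 1)) :
      ∃ a, ∀ w (hw : w < v), G.Adj v w → c w hw ≠ a := by
    let used : Finset (Fin (k + 1)) :=
      (lowerNeighbors G v).attach.image fun w ↦ c w.1 (mem_lowerNeighbors.1 w.2).2
    have card_used_lt : used.card < (Finset.univ : Finset (Fin (k + 1))).card := by
      rw [Finset.card_fin, Nat.lt_succ_iff]
      exact (Finset.card_image_le.trans_eq Finset.card_attach).trans (hk v)
    obtain ⟨a, -, ha⟩ := Finset.exists_mem_notMem_of_card_lt_card card_used_lt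
    refine ⟨a, fun w hw hadj hwa ↦ ha ?_⟩
    exact Finset.mem_image.2 ⟨⟨w, mem_lowerNeighbors.2 ⟨hadj, hw⟩⟩, Finset.mem_attach _ _, hwa⟩
  choose color hcolor using exists_color
  let c : V → Fin (k + 1) := WellFoundedLT.fix color
  have c_ne_of_lt {v w : V} (hadj : G.Adj v w) (hw : w < v) : c w ≠ c v := by
    rw [show c v = color v fun w _ ↦ c w from WellFoundedLT.fix_eq color v]
    exact hcolor v (fun w _ ↦ c w) w hw hadj
  refine ⟨SimpleGraph.Coloring.mk c fun {v w} hadj ↦ ?_⟩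
  obtain hlt | hlt := hadj.ne.lt_or_gt
  · exact c_ne_of_lt hadj.symm hlt
  · exact (c_ne_of_lt hadj hlt).symm

end LinearOrder

theorem exists_linearOrder_card_lowerNeighbors_le_of_degenerate [Finite V] [G.LocallyFinite]
    (hG : G.Degenerate k) :
    ∃ _ : LinearOrder V, ∀ v, (lowerNeighbors G v).card ≤ k := by
  cases nonempty_fintype V
  obtain ⟨r, hinj, hr⟩ := exists_injOn_rank_of_degenerate hG Finset.univ
  let order : LinearOrder V := LinearOrder.lift' r fun x y h ↦ hinj (by simp) (by simp) h
  refine ⟨order, fun v ↦ ?_⟩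
  rw [← Set.ncard_coe_finset]
  convert hr v (Finset.mem_univ v)
  ext w
  simp only [Finset.mem_coe, mem_lowerNeighbors, Finset.coe_univ, Set.mem_univ, true_and,
    Set.mem_ofPred_eq]
  rfl

theorem colorable_of_degenerate [Finite V] (hG : G.Degenerate k) : G.Colorable (k + 1) := by
  have : G.LocallyFinite := fun _ ↦ Fintype.ofFinite _
  obtain ⟨_, hk⟩ := exists_linearOrder_card_lowerNeighbors_le_of_degenerate hG
  exact colorable_of_card_lowerNeighbors_le hk

end Degeneracy

section ConflictGraph

variable {V : Type*} {G : SimpleGraph V} {n : ℕ}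

theorem withinDistOne_symm {e f : Sym2 V} (h : G.WithinDistOne e f) : G.WithinDistOne f e := by
  obtain ⟨x, hxe, hxf⟩ | ⟨g, hg, ⟨a, hae, hag⟩, ⟨b, hbg, hbf⟩⟩ := h
  · exact Or.inl ⟨x, hxf, hxe⟩
  · exact Or.inr ⟨g, hg, ⟨b, hbf, hbg⟩, ⟨a, hag, hae⟩⟩

theorem exists_mem_of_withinDistOne {u v : V} {f : Sym2 V} (h : G.WithinDistOne s(u, v) f) :
    ∃ x ∈ f, x = u ∨ x = v ∨ G.Adj u x ∨ G.Adj v x := by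
  obtain ⟨x, hx, hxf⟩ | ⟨g, hg, ⟨a, ha, hag⟩, ⟨b, hbg, hbf⟩⟩ := h
  · exact ⟨x, hxf, (Sym2.mem_iff.1 hx).imp_right Or.inl⟩
  · refine ⟨b, hbf, ?_⟩
    obtain rfl | hab := eq_or_ne a b
    · exact (Sym2.mem_iff.1 ha).imp_right Or.inl
    · obtain rfl := (Sym2.mem_and_mem_iff hab).1 ⟨hag, hbg⟩
      obtain rfl | rfl := Sym2.mem_iff.1 ha
      · exact Or.inr (Or.inr (Or.inl hg))
      · exact Or.inr (Or.inr (Or.inr hg))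

variable (G) in
/-- The square of the line graph of `G`, whose proper colorings are the strong edge-colorings
of `G`. -/
def conflictGraph : SimpleGraph G.edgeSet where
  Adj e f := e ≠ f ∧ G.WithinDistOne e f
  symm := ⟨fun _ _ h ↦ ⟨h.1.symm, withinDistOne_symm h.2⟩⟩
  loopless := ⟨fun _ h ↦ h.1 rfl⟩

theorem strongEdgeColorable_iff_colorable_conflictGraph :
    G.StrongEdgeColorable n ↔ (conflictGraph G).Colorable n :=
  ⟨fun ⟨c, hc⟩ ↦ ⟨SimpleGraph.Coloring.mk c fun {e f} h ↦ hc e f h.1 h.2⟩,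
    fun ⟨c⟩ ↦ ⟨c, fun _ _ hne h ↦ c.valid ⟨hne, h⟩⟩⟩

theorem strongChromaticIndex_le_of_degenerate_conflictGraph [Finite V]
    (h : (conflictGraph G).Degenerate n) : G.strongChromaticIndex ≤ n + 1 :=
  Nat.sInf_le (strongEdgeColorable_iff_colorable_conflictGraph.2 (colorable_of_degenerate h))

theorem strongChromaticIndex_bot : (⊥ : SimpleGraph V).strongChromaticIndex = 0 := by
  have : IsEmpty (⊥ : SimpleGraph V).edgeSet := by simp
  exact Nat.le_zero.1 (Nat.sInf_le ⟨isEmptyElim, isEmptyElim⟩)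

end ConflictGraph

section IncidenceFinset

variable {V : Type*} [DecidableEq V] {G : SimpleGraph V} [G.LocallyFinite] {Δ : ℕ} {x y : V}

theorem mem_biUnion_incidenceFinset {S : Finset V} (hadj : G.Adj x y) (h : x ∈ S ∨ y ∈ S) :
    s(x, y) ∈ S.biUnion (G.incidenceFinset ·) := by
  obtain hx | hy := h
  · exact Finset.mem_biUnion.2 ⟨x, hx, (G.mem_incidenceFinset x _).2 ⟨hadj, Sym2.mem_mk_left x y⟩⟩
  · exact Finset.mem_biUnion.2 ⟨y, hy, (G.mem_incidenceFinset y _).2 ⟨hadj, Sym2.mem_mk_right x y⟩⟩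

theorem card_biUnion_incidenceFinset_le (hdeg : ∀ w, G.degree w ≤ Δ) (S : Finset V) :
    (S.biUnion (G.incidenceFinset ·)).card ≤ S.card * Δ :=
  Finset.card_biUnion_le_card_mul _ _ _ fun w _ ↦
    (G.card_incidenceFinset_eq_degree w).trans_le (hdeg w)

end IncidenceFinset

section EarlyConflicts

variable {V : Type*} [LinearOrder V] {G : SimpleGraph V} [G.LocallyFinite] {k Δ : ℕ} {u v x y : V}

variable (G) in
/-- The edges from a vertex of `S` to one of its lower neighbors, except those through `x`. -/
def lowerEdgesAvoiding (S : Finset V) (x : V) : Finset (Sym2 V) :=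
  S.biUnion fun w ↦ ((lowerNeighbors G w).erase x).image fun y ↦ s(w, y)

theorem mem_lowerEdgesAvoiding {S : Finset V} {w : V} (hw : w ∈ S) (hy : y ∈ lowerNeighbors G w)
    (hyx : y ≠ x) : s(w, y) ∈ lowerEdgesAvoiding G S x :=
  Finset.mem_biUnion.2 ⟨w, hw, Finset.mem_image_of_mem _ (Finset.mem_erase.2 ⟨hyx, hy⟩)⟩

theorem card_lowerEdgesAvoiding_le (hk : ∀ w, (lowerNeighbors G w).card ≤ k) {S : Finset V}
    (hS : S ⊆ upperNeighbors G x) : (lowerEdgesAvoiding G S x).card ≤ S.card * (k - 1) := by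
  refine Finset.card_biUnion_le_card_mul _ _ _ fun w hw ↦ Finset.card_image_le.trans ?_
  rw [Finset.card_erase_of_mem (mem_lowerNeighbors_of_mem_upperNeighbors (hS hw))]
  exact Nat.sub_le_sub_right (hk w) 1

variable (G) in
/-- For an edge `uv` with `u < v`, a set of edges containing every edge in conflict with `uv`
whose smaller endpoint is at most `u`. The vertex `v` is left out of the upper neighbors of `u`
because the edges from `v` to its lower neighbors already occur in the first part. -/
def earlyConflictCover (u v : V) : Finset (Sym2 V) :=
  ((lowerNeighbors G u ∪ lowerNeighbors G v).biUnion (G.incidenceFinset ·)).erase s(u, v) ∪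
    (lowerEdgesAvoiding G ((upperNeighbors G u).erase v) u ∪
      lowerEdgesAvoiding G (upperNeighbors G v) v)

theorem mem_earlyConflictCover_of_adj (huv : G.Adj u v) (hlt : u < v) (hxy : G.Adj x y)
    (hne : s(x, y) ≠ s(u, v)) (hmin : x ⊓ y ≤ u)
    (hx : x = u ∨ x = v ∨ G.Adj u x ∨ G.Adj v x) : s(x, y) ∈ earlyConflictCover G u v := by
  have hu : u ∈ lowerNeighbors G v := mem_lowerNeighbors.2 ⟨huv.symm, hlt⟩
  simp only [earlyConflictCover, Finset.mem_union]
  by_cases hlow : (x ∈ lowerNeighbors G u ∨ x ∈ lowerNeighbors G v) ∨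
      y ∈ lowerNeighbors G u ∨ y ∈ lowerNeighbors G v
  · simp only [← Finset.mem_union] at hlow
    exact Or.inl (Finset.mem_erase.2 ⟨hne, mem_biUnion_incidenceFinset hxy hlow⟩)
  right
  obtain ⟨⟨hxu_low, hxv_low⟩, -, hyv_low⟩ : (_ ∧ _) ∧ _ ∧ _ := by simpa only [not_or] using hlow
  have hxu : x ≠ u := by rintro rfl; exact hxv_low hu
  have hyu : y ≠ u := by rintro rfl; exact hyv_low hu
  have lt_of_notMem_lower {z : V} (hzx : G.Adj z x) (h : x ∉ lowerNeighbors G z) : z < x :=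
    lt_of_le_of_ne' (not_lt.1 fun hxz ↦ h (mem_lowerNeighbors.2 ⟨hzx, hxz⟩)) hzx.ne'
  have y_lt_of_lt (hux : u < x) : y < u :=
    ((inf_le_iff.1 hmin).resolve_left hux.not_ge).lt_of_ne hyu
  have hxv : x ≠ v := by
    rintro rfl
    exact hyv_low (mem_lowerNeighbors.2 ⟨hxy, (y_lt_of_lt hlt).trans hlt⟩)
  obtain hux | hvx := (hx.resolve_left hxu).resolve_left hxv
  · have hux_lt := lt_of_notMem_lower hux hxu_low
    refine Or.inl (mem_lowerEdgesAvoiding ?_ (mem_lowerNeighbors.2 ⟨hxy, ?_⟩) hyu)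
    · exact Finset.mem_erase.2 ⟨hxv, mem_upperNeighbors.2 ⟨hux, hux_lt⟩⟩
    · exact (y_lt_of_lt hux_lt).trans hux_lt
  · have hvx_lt := lt_of_notMem_lower hvx hxv_low
    have hyv : y < v := (y_lt_of_lt (hlt.trans hvx_lt)).trans hlt
    exact Or.inr (mem_lowerEdgesAvoiding (mem_upperNeighbors.2 ⟨hvx, hvx_lt⟩)
      (mem_lowerNeighbors.2 ⟨hxy, hyv.trans hvx_lt⟩) hyv.ne)

theorem mem_earlyConflictCover_of_withinDistOne (huv : G.Adj u v) (hlt : u < v) {f : Sym2 V}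
    (hf : f ∈ G.edgeSet) (hne : f ≠ s(u, v)) (hmin : f.inf ≤ u)
    (h : G.WithinDistOne s(u, v) f) : f ∈ earlyConflictCover G u v := by
  obtain ⟨x, hxf, hx⟩ := exists_mem_of_withinDistOne h
  obtain ⟨y, rfl⟩ := Sym2.mem_iff_exists.1 hxf
  exact mem_earlyConflictCover_of_adj huv hlt hf hne hmin hx

/- Each lower neighbor weighs `Δ` and each upper one `k - 1 ≤ Δ`, so the total is largest when
there are `k` lower and `Δ - k` upper neighbors. -/
theorem card_lowerNeighbors_mul_add_card_upperNeighbors_mul_le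
    (hk : (lowerNeighbors G v).card ≤ k) (hdeg : G.degree v ≤ Δ) (hkΔ : k ≤ Δ + 1) :
    (lowerNeighbors G v).card * Δ + (upperNeighbors G v).card * (k - 1) + k * (k - 1) ≤
      (2 * k - 1) * Δ := by
  have hsum := card_lowerNeighbors_add_card_upperNeighbors G v
  obtain _ | j := k
  · simp [Nat.le_zero.1 hk]
  · obtain ⟨d, rfl⟩ := Nat.exists_eq_add_of_le (Nat.le_of_succ_le_succ hkΔ)
    calc (lowerNeighbors G v).card * (j + d) + (upperNeighbors G v).card * j + (j + 1) * j
        = (lowerNeighbors G v).card * d + G.degree v * j + (j + 1) * j := by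
          rw [← hsum]; ring
      _ ≤ (j + 1) * d + (j + d) * j + (j + 1) * j := by gcongr
      _ = (2 * j + 1) * (j + d) := by ring

theorem card_earlyConflictCover_lt (hk : ∀ w, (lowerNeighbors G w).card ≤ k)
    (hdeg : ∀ w, G.degree w ≤ Δ) (huv : G.Adj u v) (hlt : u < v) :
    (earlyConflictCover G u v).card <
      ((lowerNeighbors G u).card + (lowerNeighbors G v).card) * Δ +
        (((upperNeighbors G u).card - 1) * (k - 1) + (upperNeighbors G v).card * (k - 1)) := by
  have hu : u ∈ lowerNeighbors G v := mem_lowerNeighbors.2 ⟨huv.symm, hlt⟩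
  have hv : v ∈ upperNeighbors G u := mem_upperNeighbors.2 ⟨huv, hlt⟩
  refine (Finset.card_union_le _ _).trans_lt (add_lt_add_of_lt_of_le ?_ ?_)
  · have huv_mem : s(u, v) ∈
        (lowerNeighbors G u ∪ lowerNeighbors G v).biUnion (G.incidenceFinset ·) :=
      mem_biUnion_incidenceFinset huv (Or.inl (Finset.mem_union_right _ hu))
    calc _ < _ := Finset.card_erase_lt_of_mem huv_mem
      _ ≤ (lowerNeighbors G u ∪ lowerNeighbors G v).card * Δ :=
        card_biUnion_incidenceFinset_le hdeg _
      _ ≤ _ := Nat.mul_le_mul_right Δ (Finset.card_union_le _ _)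
  · refine (Finset.card_union_le _ _).trans (add_le_add ?_ ?_)
    · rw [← Finset.card_erase_of_mem hv]
      exact card_lowerEdgesAvoiding_le hk (Finset.erase_subset _ _)
    · exact card_lowerEdgesAvoiding_le hk Finset.Subset.rfl

theorem card_earlyConflictCover_le (hk : ∀ w, (lowerNeighbors G w).card ≤ k)
    (hdeg : ∀ w, G.degree w ≤ Δ) (hkΔ : k ≤ Δ + 1) (huv : G.Adj u v) (hlt : u < v) :
    (earlyConflictCover G u v).card ≤ (4 * k - 2) * Δ - k * (2 * k - 1) := by
  have hcover := card_earlyConflictCover_lt hk hdeg huv hlt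
  have hu := card_lowerNeighbors_mul_add_card_upperNeighbors_mul_le (hk u) (hdeg u) hkΔ
  have hv := card_lowerNeighbors_mul_add_card_upperNeighbors_mul_le (hk v) (hdeg v) hkΔ
  obtain ⟨j, rfl⟩ : ∃ j, k = j + 1 := by
    have : 0 < (lowerNeighbors G v).card :=
      Finset.card_pos.2 ⟨u, mem_lowerNeighbors.2 ⟨huv.symm, hlt⟩⟩
    exact Nat.exists_eq_add_one.2 (this.trans_le (hk v))
  obtain ⟨b, hb⟩ : ∃ b, (upperNeighbors G u).card = b + 1 :=
    Nat.exists_eq_add_one.2 (Finset.card_pos.2 ⟨v, mem_upperNeighbors.2 ⟨huv, hlt⟩⟩)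
  rw [hb] at hcover hu
  rw [show 2 * (j + 1) - 1 = 2 * j + 1 by omega] at hu hv ⊢
  rw [show 4 * (j + 1) - 2 = 4 * j + 2 by omega]
  simp only [Nat.add_sub_cancel] at hcover hu hv
  refine Nat.le_sub_of_add_le ?_
  linarith

end EarlyConflicts

theorem degenerate_conflictGraph {V : Type*} [Finite V] {G : SimpleGraph V} [G.LocallyFinite]
    {k Δ : ℕ} (hG : G.Degenerate k) (hdeg : ∀ v, G.degree v ≤ Δ) (hkΔ : k ≤ Δ + 1) :
    (conflictGraph G).Degenerate ((4 * k - 2) * Δ - k * (2 * k - 1)) := by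
  obtain ⟨_, hk⟩ := exists_linearOrder_card_lowerNeighbors_le_of_degenerate hG
  intro s hs
  obtain ⟨e, hes, hmax⟩ := Set.exists_max_image s (fun e ↦ e.1.inf) s.toFinite hs
  obtain ⟨u, v, hlt, he⟩ : ∃ u v, u < v ∧ e.1 = s(u, v) := by
    obtain ⟨⟨u, v⟩, he⟩ := e
    obtain hlt | hlt := (G.ne_of_adj he).lt_or_gt
    · exact ⟨u, v, hlt, rfl⟩
    · exact ⟨v, u, hlt, Sym2.eq_swap⟩
  have huv : G.Adj u v := by rw [← SimpleGraph.mem_edgeSet, ← he]; exact e.2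
  refine ⟨e, hes, le_trans ?_ (card_earlyConflictCover_le hk hdeg hkΔ huv hlt)⟩
  rw [← Set.ncard_coe_finset, ← Set.ncard_image_of_injective _ Subtype.val_injective]
  refine Set.ncard_le_ncard ?_
  rintro _ ⟨f, ⟨hfs, hne, hdist⟩, rfl⟩
  have hmin : f.1.inf ≤ u := by simpa [he, hlt.le] using hmax f hfs
  have hfe : f.1 ≠ s(u, v) := fun h ↦ hne (Subtype.ext (he.trans h.symm))
  exact mem_earlyConflictCover_of_withinDistOne huv hlt f.2 hfe hmin (he ▸ hdist)

theorem strongChromaticIndex_le_of_two_degenerate_general {V : Type*} [Finite V]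
    {G : SimpleGraph V} [G.LocallyFinite] {k Δ : ℕ} (hG : G.Degenerate k)
    (hdeg : ∀ v, G.degree v ≤ Δ) (hkΔ : k ≤ Δ + 1) :
    G.strongChromaticIndex ≤ (4 * k - 2) * Δ - k * (2 * k - 1) + 1 :=
  strongChromaticIndex_le_of_degenerate_conflictGraph (degenerate_conflictGraph hG hdeg hkΔ)

/-- The strong chromatic index of a `2`-degenerate graph with maximum degree `Δ`
is at most `6Δ - 5`. -/
theorem strongChromaticIndex_le_of_two_degenerate {V : Type*} [Fintype V] [DecidableEq V]
    (Δ : ℕ) (G : SimpleGraph V) [DecidableRel G.Adj]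
    (hdeg : G.Degenerate 2) (hΔ : G.maxDegree = Δ) :
    G.strongChromaticIndex ≤ 6 * Δ - 5 := by
  obtain rfl | hpos := Δ.eq_zero_or_pos
  · exact (G.maxDegree_eq_zero_iff.1 hΔ ▸ strongChromaticIndex_bot).le
  · have hbound := strongChromaticIndex_le_of_two_degenerate_general hdeg
      (fun v ↦ hΔ ▸ G.degree_le_maxDegree v) (Nat.succ_le_succ hpos)
    omega
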